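/- arXiv:1311.4905 — 2 statements merged into one kernel-verified Lean document; each statement's English description precedes it below -/
import Mathlib

section
/- For every finite field F_q, every integer j ≥ 1, and every nonzero polynomial f ∈ F_q[T]: Σ'_{d|f} Λ_j(d) = (deg f)^j, where the primed sum runs over the monic divisors d of f; consequently 0 ≤ Λ_j(f) ≤ (deg f)^j. -/
open Polynomial

/-- The von Mangoldt function on `F_q[T]`: `Λ(f) = deg P` if `f = c·P^k` with `c ≠ 0`,
`P` monic irreducible and `k ≥ 1`, and `Λ(f) = 0` otherwise. -/
noncomputable def polyVM {F : Type*} [Field F] (f : F[X]) : ℕ :=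
  sSup {m : ℕ | ∃ (c : F) (P : F[X]) (k : ℕ),
    c ≠ 0 ∧ P.Monic ∧ Irreducible P ∧ 1 ≤ k ∧ f = C c * P ^ k ∧ m = P.natDegree}

/- The higher-order von Mangoldt functions: `Λ_0(f) = 1` iff `f` is a nonzero constant,
`Λ_1 = Λ`, and `Λ_j(f) = Σ'_{d ∣ f} Λ_{j-1}(d) Λ(f/d) + Λ_{j-1}(f)·deg f` for `j ≥ 2`,
the sum being over monic divisors `d` of `f`. -/
open Classical in
noncomputable def polyVMJ {F : Type*} [Field F] : ℕ → F[X] → ℕ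
  | 0 => fun f => if f ≠ 0 ∧ f.natDegree = 0 then 1 else 0
  | 1 => fun f => polyVM f
  | (j + 2) => fun f =>
      (∑ᶠ d ∈ {d : F[X] | d.Monic ∧ d ∣ f}, polyVMJ (j + 1) d * polyVM (f / d))
        + polyVMJ (j + 1) f * f.natDegree

lemma pvm_eq {F : Type*} [Field F] (c : F) (P : F[X]) (k : ℕ) (hc : c ≠ 0) (hP : P.Monic)
    (hi : Irreducible P) (hk : 1 ≤ k) : polyVM (C c * P ^ k) = P.natDegree := by
  have : {m : ℕ | ∃ (c' : F) (Q : F[X]) (k' : ℕ),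
      c' ≠ 0 ∧ Q.Monic ∧ Irreducible Q ∧ 1 ≤ k' ∧ C c * P ^ k = C c' * Q ^ k' ∧ m = Q.natDegree}
      = {P.natDegree} := by
    ext m
    simp only [Set.mem_ofPred_eq, Set.mem_singleton_iff]
    constructor
    · rintro ⟨c', Q, k', hc', hQ, hQi, hk', h, rfl⟩
      have h1 : P ∣ C c' * Q ^ k' := by
        rw [← h]
        exact Dvd.dvd.mul_left (dvd_pow_self P (by omega)) _
      have hu : IsUnit (C c') := isUnit_C.2 (isUnit_iff_ne_zero.2 hc')
      have h2 : P ∣ Q := hi.prime.dvd_of_dvd_pow ((hu.dvd_mul_left).1 h1)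
      rw [eq_of_monic_of_associated hP hQ (hi.associated_of_dvd hQi h2)]
    · rintro rfl
      exact ⟨c, P, k, hc, hP, hi, hk, rfl, rfl⟩
  unfold polyVM
  rw [this]
  simp

lemma pvm_pow {F : Type*} [Field F] (P : F[X]) (k : ℕ) (hP : P.Monic)
    (hi : Irreducible P) (hk : 1 ≤ k) : polyVM (P ^ k) = P.natDegree := by
  simpa using pvm_eq 1 P k one_ne_zero hP hi hk

lemma pvm_ne {F : Type*} [Field F] {f : F[X]} (h : polyVM f ≠ 0) :
    ∃ (c : F) (P : F[X]) (k : ℕ), c ≠ 0 ∧ P.Monic ∧ Irreducible P ∧ 1 ≤ k ∧ f = C c * P ^ k := by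
  by_contra hn
  apply h
  unfold polyVM
  refine (congrArg sSup (Set.eq_empty_iff_forall_notMem.2 fun m => ?_)).trans csSup_empty
  rintro ⟨c, P, k, h1, h2, h3, h4, h5, h6⟩
  exact hn ⟨c, P, k, h1, h2, h3, h4, h5⟩

lemma pvm_C_mul {F : Type*} [Field F] (a : F) (ha : a ≠ 0) (f : F[X]) :
    polyVM (C a * f) = polyVM f := by
  have key : ∀ (a : F) (ha : a ≠ 0) (f : F[X]), polyVM f ≠ 0 → polyVM (C a * f) = polyVM f := by
    intro a ha f h
    obtain ⟨c, P, k, h1, h2, h3, h4, rfl⟩ := pvm_ne h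
    rw [pvm_eq c P k h1 h2 h3 h4, ← mul_assoc, ← C_mul, pvm_eq _ P k (mul_ne_zero ha h1) h2 h3 h4]
  by_cases h : polyVM f = 0
  · by_contra hn
    have h' : polyVM (C a * f) ≠ 0 := fun h0 => hn (h0.trans h.symm)
    have := key a⁻¹ (inv_ne_zero ha) _ h'
    rw [← mul_assoc, ← C_mul, inv_mul_cancel₀ ha, C_1, one_mul] at this
    exact hn this.symm
  · exact key a ha f h

lemma monDiv_finite {F : Type*} [Field F] {f : F[X]} (hf : f ≠ 0) :
    {d : F[X] | d.Monic ∧ d ∣ f}.Finite := by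
  have := Polynomial.fintypeSubtypeMonicDvd f hf
  exact Set.finite_coe_iff.1 (@Finite.of_fintype _ this)

open Classical in
noncomputable def monDiv {F : Type*} [Field F] (f : F[X]) : Finset F[X] :=
  if h : f ≠ 0 then (monDiv_finite h).toFinset else ∅

lemma mem_monDiv {F : Type*} [Field F] {f d : F[X]} :
    d ∈ monDiv f ↔ f ≠ 0 ∧ d.Monic ∧ d ∣ f := by
  unfold monDiv
  split_ifs with h <;> simp [h]

lemma finsum_monDiv {F : Type*} [Field F] {f : F[X]} (hf : f ≠ 0) (g : F[X] → ℕ) :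
    (∑ᶠ d ∈ {d : F[X] | d.Monic ∧ d ∣ f}, g d) = ∑ d ∈ monDiv f, g d := by
  rw [← finsum_mem_coe_finset]
  congr! 3 with d
  simp [mem_monDiv, hf]

lemma sum_pvm {F : Type*} [Field F] (f : F[X]) (hf : f ≠ 0) :
    ∑ d ∈ monDiv f, polyVM d = f.natDegree := by
  classical
  induction f using WfDvdMonoid.induction_on_irreducible with
  | zero => exact absurd rfl hf
  | unit u hu =>
    rw [natDegree_eq_zero_of_isUnit hu]
    apply Finset.sum_eq_zero
    intro d hd
    obtain ⟨-, hm, hd⟩ := mem_monDiv.1 hd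
    by_contra hn
    obtain ⟨c, P, k, h1, h2, h3, h4, rfl⟩ := pvm_ne hn
    refine h3.not_isUnit (isUnit_of_dvd_unit ?_ hu)
    exact (Dvd.dvd.mul_left (dvd_pow_self P (by omega)) _).trans hd
  | mul g p hg hp ih =>
    have ih := ih hg
    set P := normalize p with hPdef
    have hPm : P.Monic := monic_normalize hp.ne_zero
    have has : Associated p P := (normalize_associated p).symm
    have hPi : Irreducible P := has.irreducible hp
    have hdvd : ∀ d : F[X], d ∣ p * g ↔ d ∣ P * g := fun d =>
      (has.mul_right g).dvd_iff_dvd_right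
    have hfin : FiniteMultiplicity P g := FiniteMultiplicity.of_prime_left hPi.prime hg
    set k := multiplicity P g with hk
    have hk1 : ∀ i, P ^ i ∣ g ↔ i ≤ k := fun i => hfin.pow_dvd_iff_le_multiplicity
    have hsub : monDiv g ⊆ monDiv (p * g) := by
      intro d hd
      obtain ⟨-, hm, hd⟩ := mem_monDiv.1 hd
      exact mem_monDiv.2 ⟨hf, hm, hd.mul_left _⟩
    have hnot : P ^ (k + 1) ∉ monDiv g := by
      intro h
      have := (hk1 _).1 (mem_monDiv.1 h).2.2
      omega
    have hdeg : p.natDegree = P.natDegree :=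
      natDegree_eq_of_degree_eq (degree_eq_degree_of_associated has)
    rw [natDegree_mul hp.ne_zero hg, hdeg, ← ih, ← pvm_pow P (k + 1) hPm hPi (by omega),
      ← Finset.sum_insert hnot]
    symm
    apply Finset.sum_subset
    · intro d hd
      rcases Finset.mem_insert.1 hd with rfl | hd
      · refine mem_monDiv.2 ⟨hf, hPm.pow _, (hdvd _).2 ?_⟩
        rw [pow_succ']
        exact mul_dvd_mul_left _ ((hk1 k).2 le_rfl)
      · exact hsub hd
    · intro d hd hdn
      obtain ⟨-, hm, hd⟩ := mem_monDiv.1 hd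
      by_contra hn
      obtain ⟨c, Q, i, h1, h2, h3, h4, rfl⟩ := pvm_ne hn
      have hc : c = 1 := by
        have := hm.leadingCoeff
        simpa [(h2.pow i).leadingCoeff] using this
      subst hc
      simp only [C_1, one_mul] at *
      apply hdn
      rw [hdvd] at hd
      by_cases hQ : Q = P
      · subst hQ
        by_cases hik : i ≤ k
        · exact Finset.mem_insert_of_mem (mem_monDiv.2 ⟨hg, hm, (hk1 i).2 hik⟩)
        · have : i = k + 1 := by
            obtain ⟨i, rfl⟩ : ∃ i', i = i' + 1 := ⟨i - 1, by omega⟩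
            rw [pow_succ'] at hd
            have := (hk1 i).1 ((mul_dvd_mul_iff_left hPi.ne_zero).1 hd)
            omega
          rw [this]
          exact Finset.mem_insert_self _ _
      · refine Finset.mem_insert_of_mem (mem_monDiv.2 ⟨hg, hm, ?_⟩)
        refine IsCoprime.dvd_of_dvd_mul_left (IsCoprime.pow_left ?_) hd
        refine (h3.coprime_iff_not_dvd).2 fun h => hQ ?_
        exact eq_of_monic_of_associated h2 hPm (h3.associated_of_dvd hPi h)

lemma pvmj_succ {F : Type*} [Field F] (j : ℕ) {f : F[X]} (hf : f ≠ 0) :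
    polyVMJ (j + 2) f = (∑ d ∈ monDiv f, polyVMJ (j + 1) d * polyVM (f / d))
        + polyVMJ (j + 1) f * f.natDegree := by
  rw [← finsum_monDiv hf, polyVMJ]

lemma sum_swap {F : Type*} [Field F] {f : F[X]} (hf : f ≠ 0) (a b : F[X] → ℕ) :
    ∑ d ∈ monDiv f, ∑ e ∈ monDiv d, a e * b (d / e)
      = ∑ e ∈ monDiv f, ∑ h ∈ monDiv (f / e), a e * b h := by
  rw [Finset.sum_sigma', Finset.sum_sigma']
  refine Finset.sum_bij' (fun x _ => ⟨x.2, x.1 / x.2⟩) (fun x _ => ⟨x.1 * x.2, x.1⟩) ?_ ?_ ?_ ?_ ?_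
  · rintro ⟨d, e⟩ h
    simp only [Finset.mem_sigma, mem_monDiv] at h ⊢
    obtain ⟨⟨-, hd, t, rfl⟩, hd0, he, s, rfl⟩ := h
    have hs : s.Monic := he.of_mul_monic_left hd
    rw [mul_div_cancel_left₀ _ he.ne_zero, mul_assoc, mul_div_cancel_left₀ _ he.ne_zero]
    rw [mul_assoc] at hf
    exact ⟨⟨hf, he, dvd_mul_right _ _⟩, right_ne_zero_of_mul hf, hs, dvd_mul_right _ _⟩
  · rintro ⟨e, h⟩ hh
    simp only [Finset.mem_sigma, mem_monDiv] at hh ⊢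
    obtain ⟨⟨-, he, t, rfl⟩, h0, hm, hd⟩ := hh
    rw [mul_div_cancel_left₀ _ he.ne_zero] at hd
    exact ⟨⟨hf, he.mul hm, mul_dvd_mul_left _ hd⟩, (he.mul hm).ne_zero, he, dvd_mul_right _ _⟩
  · rintro ⟨d, e⟩ h
    simp only [Finset.mem_sigma, mem_monDiv] at h ⊢
    obtain ⟨⟨-, hd, -⟩, hd0, he, s, rfl⟩ := h
    rw [mul_div_cancel_left₀ _ he.ne_zero]
  · rintro ⟨e, h⟩ hh
    simp only [Finset.mem_sigma, mem_monDiv] at hh ⊢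
    rw [mul_div_cancel_left₀ _ hh.1.2.1.ne_zero]
  · rintro ⟨d, e⟩ h
    rfl

lemma sum_pvmj {F : Type*} [Field F] (j : ℕ) (f : F[X]) (hf : f ≠ 0) :
    ∑ d ∈ monDiv f, polyVMJ (j + 1) d = f.natDegree ^ (j + 1) := by
  induction j with
  | zero => simpa [polyVMJ] using sum_pvm f hf
  | succ j ih =>
    have h1 : ∑ d ∈ monDiv f, polyVMJ (j + 1 + 1) d = ∑ d ∈ monDiv f,
        ((∑ e ∈ monDiv d, polyVMJ (j + 1) e * polyVM (d / e))
          + polyVMJ (j + 1) d * d.natDegree) :=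
      Finset.sum_congr rfl fun d hd => pvmj_succ j (mem_monDiv.1 hd).2.1.ne_zero
    rw [h1, Finset.sum_add_distrib, sum_swap hf, ← Finset.sum_add_distrib, pow_succ, ← ih,
      Finset.sum_mul]
    refine Finset.sum_congr rfl fun e he => ?_
    obtain ⟨-, hem, t, rfl⟩ := mem_monDiv.1 he
    replace he := hem
    have ht := right_ne_zero_of_mul hf
    rw [mul_div_cancel_left₀ _ he.ne_zero, ← Finset.mul_sum, sum_pvm t ht,
      natDegree_mul he.ne_zero ht]
    ring

lemma pvmj_C_mul {F : Type*} [Field F] (j : ℕ) (a : F) (ha : a ≠ 0) (f : F[X]) (hf : f ≠ 0) :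
    polyVMJ (j + 1) (C a * f) = polyVMJ (j + 1) f := by
  induction j with
  | zero => simpa [polyVMJ] using pvm_C_mul a ha f
  | succ j ih =>
    have hu : IsUnit (C a) := isUnit_C.2 (isUnit_iff_ne_zero.2 ha)
    have hf' : C a * f ≠ 0 := mul_ne_zero hu.ne_zero hf
    rw [pvmj_succ j hf, pvmj_succ j hf', ih, natDegree_C_mul ha]
    congr 1
    have hD : monDiv (C a * f) = monDiv f := by
      ext d
      simp only [mem_monDiv, ne_eq, hu.dvd_mul_left, mul_eq_zero, hu.ne_zero, false_or]
    rw [hD]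
    refine Finset.sum_congr rfl fun e he => ?_
    obtain ⟨-, hem, t, rfl⟩ := mem_monDiv.1 he
    replace he := hem
    rw [mul_left_comm, mul_div_cancel_left₀ _ he.ne_zero, mul_div_cancel_left₀ _ he.ne_zero,
      pvm_C_mul a ha]

/-- `Σ'_{d ∣ f} Λ_j(d) = (deg f)^j` (the sum over monic divisors of `f`), and
consequently `0 ≤ Λ_j(f) ≤ (deg f)^j` (equation (1.9) of Rodgers,
"The covariance of almost-primes in F_q[T]"). -/
theorem sum_vonMangoldt_divisors_eq {F : Type*} [Field F]
    (j : ℕ) (hj : 1 ≤ j) (f : F[X]) (hf : f ≠ 0) :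
    (∑ᶠ d ∈ {d : F[X] | d.Monic ∧ d ∣ f}, polyVMJ j d) = f.natDegree ^ j
      ∧ polyVMJ j f ≤ f.natDegree ^ j := by
  obtain ⟨j, rfl⟩ : ∃ i, j = i + 1 := ⟨j - 1, by omega⟩
  have hs := sum_pvmj j f hf
  refine ⟨(finsum_monDiv hf _).trans hs, ?_⟩
  have hl : f.leadingCoeff⁻¹ ≠ 0 := inv_ne_zero (leadingCoeff_ne_zero.2 hf)
  have hu : IsUnit (C f.leadingCoeff⁻¹) := isUnit_C.2 (isUnit_iff_ne_zero.2 hl)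
  rw [← hs, ← pvmj_C_mul j _ hl f hf]
  refine Finset.single_le_sum (f := fun d => polyVMJ (j + 1) d) (fun _ _ => Nat.zero_le _)
    (mem_monDiv.2 ⟨hf, ?_, (hu.mul_left_dvd).2 dvd_rfl⟩)
  rw [mul_comm]
  exact monic_mul_leadingCoeff_inv hf
end

section
/- Let F_q be a finite field with q elements, and let j, k ≥ 1 and n > h ≥ 0 be integers. Then Σ_{f ∈ M_n} Ψ̃_j^♮(f;h) · Ψ̃_k^♮(f;h) = (q^{h+1}/(q−1)) · Σ_{(g_1,g_2) ∈ P_n^♮ × P_n^♮, g_1 ≡ g_2 mod T^{n−h}} Λ̃_j^♮(g_1) · Λ̃_k^♮(g_2). -/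
open Polynomial

/-- `M_m^♮`, the set of monic polynomials of degree `m` with nonzero constant term. -/
def monicSharp (F : Type*) [Field F] (m : ℕ) : Set (Polynomial F) :=
  {f | f.Monic ∧ f.natDegree = m ∧ f.coeff 0 ≠ 0}

/-- `E_j^♮(m) = (1/|M_m^♮|) Σ_{f ∈ M_m^♮} Λ_j(f)`. -/
noncomputable def Esharp (F : Type*) [Field F] (j m : ℕ) : ℝ :=
  (∑ᶠ f ∈ monicSharp F m, (polyVMJ j f : ℝ)) / ((monicSharp F m).ncard : ℝ)

/-- `Λ̃_j^♮(f) = Λ_j(f) − E_j^♮(deg f)`. -/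
noncomputable def lamSharp {F : Type*} [Field F] (j : ℕ) (f : F[X]) : ℝ :=
  (polyVMJ j f : ℝ) - Esharp F j f.natDegree

/-- `Ψ̃_j^♮(f;h) = Σ_{g ∈ M_n^♮, deg(f−g) ≤ h} Λ̃_j^♮(g)` for `f` of degree `n`
(the zero polynomial has degree `⊥ ≤ h`). -/
noncomputable def psiSharp {F : Type*} [Field F] (j : ℕ) (f : F[X]) (h : ℕ) : ℝ :=
  ∑ᶠ g ∈ {g : F[X] | g ∈ monicSharp F f.natDegree ∧ (f - g).degree ≤ (h : WithBot ℕ)},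
    lamSharp j g

section helpers

variable {F : Type*} [Field F]

lemma rev_natDegree (f : F[X]) (h0 : f.coeff 0 ≠ 0) : f.reverse.natDegree = f.natDegree := by
  rw [reverse_natDegree, natTrailingDegree_eq_zero.2 (Or.inr h0), Nat.sub_zero]

lemma rev_rev (f : F[X]) (h0 : f.coeff 0 ≠ 0) : f.reverse.reverse = f := by
  ext i
  rw [coeff_reverse, rev_natDegree f h0, coeff_reverse, revAt_invol]

lemma rev_coeff_zero (f : F[X]) (h0 : f.coeff 0 ≠ 0) : f.reverse.coeff 0 ≠ 0 := by
  rw [coeff_zero_reverse]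
  intro h
  rw [leadingCoeff_eq_zero] at h
  simp [h] at h0

lemma rev_lead (f : F[X]) (h0 : f.coeff 0 ≠ 0) : f.reverse.leadingCoeff = f.coeff 0 := by
  rw [leadingCoeff, rev_natDegree f h0, coeff_reverse, revAt_le le_rfl, Nat.sub_self]

lemma rev_unit_of (a : F[X]) (h0 : a.coeff 0 ≠ 0) (h : IsUnit a.reverse) : IsUnit a := by
  have h1 := natDegree_eq_zero_of_isUnit h
  rw [rev_natDegree a h0] at h1
  rw [eq_C_of_natDegree_eq_zero h1]
  exact isUnit_C.2 h0.isUnit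

lemma rev_irr (P : F[X]) (h0 : P.coeff 0 ≠ 0) (hP : Irreducible P) : Irreducible P.reverse := by
  constructor
  · intro h
    exact hP.not_isUnit (rev_unit_of P h0 h)
  · intro a b hab
    have hc : (a * b).coeff 0 ≠ 0 := hab ▸ rev_coeff_zero P h0
    rw [mul_coeff_zero] at hc
    have h1 : P = a.reverse * b.reverse := by
      rw [← reverse_mul_of_domain, ← hab, rev_rev P h0]
    rcases hP.isUnit_or_isUnit h1 with h | h
    · exact Or.inl (rev_unit_of a (left_ne_zero_of_mul hc) h)
    · exact Or.inr (rev_unit_of b (right_ne_zero_of_mul hc) h)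

lemma rev_C_mul (c : F) (f : F[X]) : (C c * f).reverse = C c * f.reverse := by
  rw [reverse_mul_of_domain, reverse_C]

lemma rev_pow (f : F[X]) (k : ℕ) : (f ^ k).reverse = f.reverse ^ k := by
  induction k with
  | zero => simpa using reverse_C (1 : F)
  | succ k ih => rw [pow_succ, reverse_mul_of_domain, ih, pow_succ]

/-- normalised reverse -/
noncomputable def nrev (d : F[X]) : F[X] := C (d.coeff 0)⁻¹ * d.reverse

lemma C_mul_nrev (d : F[X]) (h0 : d.coeff 0 ≠ 0) : C (d.coeff 0) * nrev d = d.reverse := by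
  rw [nrev, ← mul_assoc, ← C_mul, mul_inv_cancel₀ h0, C_1, one_mul]

lemma nrev_monic (d : F[X]) (h0 : d.coeff 0 ≠ 0) : (nrev d).Monic := by
  rw [Monic, nrev, leadingCoeff_mul, leadingCoeff_C, rev_lead d h0, inv_mul_cancel₀ h0]

lemma nrev_coeff_zero (d : F[X]) (hm : d.Monic) : (nrev d).coeff 0 = (d.coeff 0)⁻¹ := by
  rw [nrev, coeff_C_mul, coeff_zero_reverse, hm.leadingCoeff, mul_one]

lemma nrev_nrev (d : F[X]) (hm : d.Monic) (h0 : d.coeff 0 ≠ 0) : nrev (nrev d) = d := by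
  have h1 := nrev_coeff_zero d hm
  rw [nrev, h1, inv_inv, nrev, rev_C_mul, rev_rev d h0, ← mul_assoc, ← C_mul,
    mul_inv_cancel₀ h0, C_1, one_mul]

lemma nrev_natDegree (d : F[X]) (h0 : d.coeff 0 ≠ 0) : (nrev d).natDegree = d.natDegree := by
  rw [nrev, natDegree_C_mul (inv_ne_zero h0), rev_natDegree d h0]

lemma polyVM_C_mul (c : F) (hc : c ≠ 0) (f : F[X]) : polyVM (C c * f) = polyVM f := by
  unfold polyVM
  congr 1
  ext m
  constructor
  · rintro ⟨a, P, k, ha, hP, hi, hk, hf, hm⟩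
    refine ⟨c⁻¹ * a, P, k, mul_ne_zero (inv_ne_zero hc) ha, hP, hi, hk, ?_, hm⟩
    rw [C_mul, mul_assoc, ← hf, ← mul_assoc, ← C_mul, inv_mul_cancel₀ hc, C_1, one_mul]
  · rintro ⟨a, P, k, ha, hP, hi, hk, hf, hm⟩
    refine ⟨c * a, P, k, mul_ne_zero hc ha, hP, hi, hk, ?_, hm⟩
    rw [C_mul, mul_assoc, ← hf]

lemma polyVM_rev_aux (f : F[X]) (h0 : f.coeff 0 ≠ 0) (m : ℕ)
    (h : ∃ (c : F) (P : F[X]) (k : ℕ),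
      c ≠ 0 ∧ P.Monic ∧ Irreducible P ∧ 1 ≤ k ∧ f = C c * P ^ k ∧ m = P.natDegree) :
    ∃ (c : F) (P : F[X]) (k : ℕ),
      c ≠ 0 ∧ P.Monic ∧ Irreducible P ∧ 1 ≤ k ∧ f.reverse = C c * P ^ k ∧ m = P.natDegree := by
  obtain ⟨c, P, k, hc, hP, hi, hk, hf, hm⟩ := h
  have hP0 : P.coeff 0 ≠ 0 := by
    intro hP0
    apply h0
    rw [hf, coeff_C_mul, coeff_zero_eq_eval_zero, eval_pow, ← coeff_zero_eq_eval_zero, hP0,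
      zero_pow (by omega), mul_zero]
  refine ⟨c * P.coeff 0 ^ k, nrev P, k, mul_ne_zero hc (pow_ne_zero _ hP0), nrev_monic P hP0,
    ?_, hk, ?_, ?_⟩
  · have hu : IsUnit (C (P.coeff 0)⁻¹) := isUnit_C.2 (inv_ne_zero hP0).isUnit
    exact (irreducible_isUnit_mul hu).2 (rev_irr P hP0 hi)
  · rw [hf, rev_C_mul, rev_pow, ← C_mul_nrev P hP0, mul_pow, C_mul, C_pow, mul_assoc]
  · rw [nrev_natDegree P hP0, hm]

lemma polyVM_rev (f : F[X]) (h0 : f.coeff 0 ≠ 0) : polyVM f.reverse = polyVM f := by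
  unfold polyVM
  congr 1
  ext m
  constructor
  · intro h
    have := polyVM_rev_aux f.reverse (rev_coeff_zero f h0) m h
    rwa [rev_rev f h0] at this
  · exact polyVM_rev_aux f h0 m

lemma polyVMJ_C_mul (c : F) (hc : c ≠ 0) (j : ℕ) : ∀ f : F[X], polyVMJ j (C c * f) = polyVMJ j f := by
  induction j with
  | zero => 
    intro f
    simp only [polyVMJ]
    classical
    exact if_congr (by rw [natDegree_C_mul hc]; simp [hc]) rfl rfl
  | succ j ih =>
    cases j with
    | zero => intro f; simpa [polyVMJ] using polyVM_C_mul c hc f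
    | succ j =>
      intro f
      simp only [polyVMJ]
      rw [ih f, natDegree_C_mul hc]
      congr 1
      have hu : IsUnit (C c) := isUnit_C.2 hc.isUnit
      have hs : {d : F[X] | d.Monic ∧ d ∣ C c * f} = {d : F[X] | d.Monic ∧ d ∣ f} := by
        ext d
        simp only [Set.mem_ofPred_eq, hu.dvd_mul_left]
      rw [hs]
      apply finsum_mem_congr rfl
      rintro d ⟨-, hd⟩
      rw [EuclideanDomain.mul_div_assoc _ hd, polyVM_C_mul c hc]

lemma coeff_zero_of_dvd {d f : F[X]} (hd : d ∣ f) (h0 : f.coeff 0 ≠ 0) : d.coeff 0 ≠ 0 := by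
  obtain ⟨e, rfl⟩ := hd
  rw [mul_coeff_zero] at h0
  exact left_ne_zero_of_mul h0

lemma nrev_dvd {d f : F[X]} (hd : d ∣ f) (h0 : f.coeff 0 ≠ 0) : nrev d ∣ f.reverse := by
  have h1 := coeff_zero_of_dvd hd h0
  obtain ⟨e, rfl⟩ := hd
  rw [reverse_mul_of_domain, ← C_mul_nrev d h1]
  exact ⟨C (d.coeff 0) * e.reverse, by ring⟩

lemma polyVMJ_rev (j : ℕ) : ∀ f : F[X], f.coeff 0 ≠ 0 → polyVMJ j f.reverse = polyVMJ j f := by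
  induction j with
  | zero => 
    intro f h0
    simp only [polyVMJ]
    classical
    exact if_congr (by rw [rev_natDegree f h0]; simp) rfl rfl
  | succ j ih =>
    cases j with
    | zero => intro f h0; simpa [polyVMJ] using polyVM_rev f h0
    | succ j =>
      intro f h0
      simp only [polyVMJ]
      rw [ih f h0, rev_natDegree f h0]
      congr 1
      symm
      refine finsum_mem_eq_of_bijOn nrev ⟨?_, ?_, ?_⟩ ?_
      · rintro d ⟨hm, hd⟩
        exact ⟨nrev_monic d (coeff_zero_of_dvd hd h0), nrev_dvd hd h0⟩
      · rintro d ⟨hm, hd⟩ e ⟨hm', he⟩ hde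
        rw [← nrev_nrev d hm (coeff_zero_of_dvd hd h0), hde,
          nrev_nrev e hm' (coeff_zero_of_dvd he h0)]
      · rintro d ⟨hm, hd⟩
        have h1 := rev_coeff_zero f h0
        have h2 := coeff_zero_of_dvd hd h1
        refine ⟨nrev d, ⟨nrev_monic d h2, ?_⟩, nrev_nrev d hm h2⟩
        have := nrev_dvd hd h1
        rwa [rev_rev f h0] at this
      · rintro d ⟨hm, hd⟩
        have h2 := coeff_zero_of_dvd hd h0
        have h3 : polyVMJ (j + 1) (nrev d) = polyVMJ (j + 1) d := by
          rw [nrev, polyVMJ_C_mul _ (inv_ne_zero h2), ih d h2]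
        rw [h3]
        congr 1
        obtain ⟨e, rfl⟩ := hd
        have he : e.coeff 0 ≠ 0 := coeff_zero_of_dvd (Dvd.intro_left d rfl) h0
        rw [mul_div_cancel_left₀ _ hm.ne_zero, reverse_mul_of_domain, ← C_mul_nrev d h2,
          mul_comm (C _), mul_assoc, mul_div_cancel_left₀ _ (nrev_monic d h2).ne_zero,
          polyVM_C_mul _ h2, polyVM_rev e he]

lemma lamSharp_rev (j : ℕ) (f : F[X]) (h0 : f.coeff 0 ≠ 0) :
    lamSharp j f.reverse = lamSharp j f := by
  rw [lamSharp, lamSharp, polyVMJ_rev j f h0, rev_natDegree f h0]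

lemma lamSharp_C_mul (j : ℕ) (c : F) (hc : c ≠ 0) (f : F[X]) :
    lamSharp j (C c * f) = lamSharp j f := by
  rw [lamSharp, lamSharp, polyVMJ_C_mul c hc, natDegree_C_mul hc]

lemma rev_dvd_iff (n h : ℕ) (hh : h < n) (a b : F[X]) (ha : a.natDegree = n) (hb : b.natDegree = n) :
    (X : F[X]) ^ (n - h) ∣ a.reverse - b.reverse ↔ (a - b).degree ≤ (h : WithBot ℕ) := by
  rw [X_pow_dvd_iff, degree_le_iff_coeff_zero]
  simp only [coeff_sub, coeff_reverse, ha, hb]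
  constructor
  · intro H m hm
    have hm' : h < m := by exact_mod_cast hm
    by_cases hmn : m ≤ n
    · have := H (n - m) (by omega)
      rwa [revAt_le (by omega), Nat.sub_sub_self hmn] at this
    · rw [coeff_eq_zero_of_natDegree_lt (by omega), coeff_eq_zero_of_natDegree_lt (by omega),
        sub_zero]
  · intro H d hd
    rw [revAt_le (by omega)]
    exact H _ (by exact_mod_cast (by omega : h < n - d))

/-- The pair set of the right hand side, up to reversal. -/
lemma sum_rev (j k n h : ℕ) (hh : h < n) :
    ∑ᶠ p ∈ {p : F[X] × F[X] |
              p.1.natDegree = n ∧ p.1.coeff 0 ≠ 0 ∧ p.2.natDegree = n ∧ p.2.coeff 0 ≠ 0 ∧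
              (X : F[X]) ^ (n - h) ∣ (p.1 - p.2)},
            lamSharp j p.1 * lamSharp k p.2 =
    ∑ᶠ p ∈ {p : F[X] × F[X] |
              p.1.natDegree = n ∧ p.1.coeff 0 ≠ 0 ∧ p.2.natDegree = n ∧ p.2.coeff 0 ≠ 0 ∧
              (p.1 - p.2).degree ≤ (h : WithBot ℕ)},
            lamSharp j p.1 * lamSharp k p.2 := by
  symm
  refine finsum_mem_eq_of_bijOn (fun p => (p.1.reverse, p.2.reverse)) ⟨?_, ?_, ?_⟩ ?_
  · rintro ⟨a, b⟩ ⟨ha, ha0, hb, hb0, hab⟩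
    exact ⟨(rev_natDegree a ha0).trans ha, rev_coeff_zero a ha0, (rev_natDegree b hb0).trans hb,
      rev_coeff_zero b hb0, (rev_dvd_iff n h hh a b ha hb).2 hab⟩
  · rintro ⟨a, b⟩ ⟨ha, ha0, hb, hb0, hab⟩ ⟨a', b'⟩ ⟨ha', ha0', hb', hb0', hab'⟩ heq
    simp only [Prod.mk.injEq] at heq ha0 hb0 ha0' hb0' ⊢
    exact ⟨by rw [← rev_rev a ha0, heq.1, rev_rev a' ha0'],
      by rw [← rev_rev b hb0, heq.2, rev_rev b' hb0']⟩
  · rintro ⟨a, b⟩ ⟨ha, ha0, hb, hb0, hab⟩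
    simp only at ha ha0 hb hb0 hab
    refine ⟨(a.reverse, b.reverse), ⟨(rev_natDegree a ha0).trans ha, rev_coeff_zero a ha0,
      (rev_natDegree b hb0).trans hb, rev_coeff_zero b hb0, ?_⟩, ?_⟩
    · apply (rev_dvd_iff n h hh _ _ ((rev_natDegree a ha0).trans ha)
        ((rev_natDegree b hb0).trans hb)).1
      rwa [rev_rev a ha0, rev_rev b hb0]
    · simp only [rev_rev a ha0, rev_rev b hb0]
  · rintro ⟨a, b⟩ ⟨ha, ha0, hb, hb0, hab⟩
    simp only at ha0 hb0
    simp only [lamSharp_rev _ a ha0, lamSharp_rev _ b hb0]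

lemma finite_natDegree [Fintype F] (n : ℕ) : {f : F[X] | f.natDegree ≤ n}.Finite := by
  have : Finite (degreeLT F (n + 1)) := Finite.of_equiv _ (degreeLTEquiv F (n + 1)).toEquiv.symm
  refine Set.Finite.subset (Set.toFinite (degreeLT F (n + 1) : Set F[X])) ?_
  intro f hf
  simp only [Set.mem_ofPred_eq] at hf
  rw [SetLike.mem_coe, mem_degreeLT]
  exact lt_of_le_of_lt degree_le_natDegree (by exact_mod_cast Nat.lt_succ_of_le hf)

lemma ncard_near [Fintype F] (n h : ℕ) (hh : h < n) (g : F[X]) (hg : g.Monic)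
    (hgn : g.natDegree = n) :
    {f : F[X] | (f.Monic ∧ f.natDegree = n) ∧ (f - g).degree ≤ (h : WithBot ℕ)}.ncard
      = Fintype.card F ^ (h + 1) := by
  have h1 : (degreeLT F (h + 1) : Set F[X]).ncard = Fintype.card F ^ (h + 1) := by
    rw [← Nat.card_coe_set_eq, SetLike.coe_sort_coe,
      Nat.card_congr (degreeLTEquiv F (h + 1)).toEquiv]
    simp
  rw [← h1, ← Set.ncard_image_of_injective (degreeLT F (h + 1) : Set F[X]) (add_left_injective g)]
  congr 1
  ext f
  simp only [Set.mem_ofPred_eq, Set.mem_image, SetLike.mem_coe, mem_degreeLT]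
  have key : ∀ r : F[X], r.degree ≤ (h : WithBot ℕ) ↔ r.degree < ((h + 1 : ℕ) : WithBot ℕ) := by
    intro r
    rw [degree_le_iff_coeff_zero, degree_lt_iff_coeff_zero]
    constructor
    · intro H m hm; exact H m (by exact_mod_cast hm)
    · intro H m hm; exact H m (by have : h < m := by exact_mod_cast hm
                                  omega)
  constructor
  · rintro ⟨-, hf⟩
    exact ⟨f - g, (key _).1 hf, sub_add_cancel _ _⟩
  · rintro ⟨r, hr, rfl⟩
    have hrg : r.degree < g.degree := by
      rw [degree_eq_natDegree hg.ne_zero, hgn]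
      exact lt_of_lt_of_le hr (by exact_mod_cast hh)
    refine ⟨⟨?_, ?_⟩, ?_⟩
    · exact hg.add_of_right hrg
    · rw [natDegree_add_eq_right_of_degree_lt hrg, hgn]
    · rw [add_sub_cancel_right]; exact (key _).2 hr

lemma near_trans {h : ℕ} {a b c : F[X]} (h1 : (a - b).degree ≤ (h : WithBot ℕ))
    (h2 : (a - c).degree ≤ (h : WithBot ℕ)) : (b - c).degree ≤ (h : WithBot ℕ) := by
  have : b - c = (a - c) - (a - b) := by ring
  rw [this]
  exact (degree_sub_le _ _).trans (max_le h2 h1)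

lemma near_trans' {h : ℕ} {a b c : F[X]} (h1 : (a - b).degree ≤ (h : WithBot ℕ))
    (h2 : (b - c).degree ≤ (h : WithBot ℕ)) : (a - c).degree ≤ (h : WithBot ℕ) := by
  have : a - c = (a - b) + (b - c) := by ring
  rw [this]
  exact (degree_add_le _ _).trans (max_le h1 h2)

lemma lead_eq (n h : ℕ) (hh : h < n) (a b : F[X]) (ha : a.natDegree = n) (hb : b.natDegree = n)
    (hab : (a - b).degree ≤ (h : WithBot ℕ)) : a.leadingCoeff = b.leadingCoeff := by
  rw [degree_le_iff_coeff_zero] at hab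
  have := hab n (by exact_mod_cast hh)
  rw [coeff_sub, sub_eq_zero] at this
  rw [leadingCoeff, leadingCoeff, ha, hb, this]

/-- Pairs of monic polynomials. -/
def pairSet (F : Type*) [Field F] (n h : ℕ) : Set (F[X] × F[X]) :=
  {p | p.1 ∈ monicSharp F n ∧ p.2 ∈ monicSharp F n ∧ (p.1 - p.2).degree ≤ (h : WithBot ℕ)}

lemma pairSet_finite [Fintype F] (n h : ℕ) : (pairSet F n h).Finite := by
  refine Set.Finite.subset ((finite_natDegree n).prod (finite_natDegree n)) ?_
  rintro ⟨a, b⟩ ⟨ha, hb, -⟩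
  exact ⟨ha.2.1.le, hb.2.1.le⟩

lemma sum_scale [Fintype F] (j k n h : ℕ) (hh : h < n) :
    ∑ᶠ p ∈ {p : F[X] × F[X] |
              p.1.natDegree = n ∧ p.1.coeff 0 ≠ 0 ∧ p.2.natDegree = n ∧ p.2.coeff 0 ≠ 0 ∧
              (p.1 - p.2).degree ≤ (h : WithBot ℕ)},
            lamSharp j p.1 * lamSharp k p.2 =
    ((Fintype.card F : ℝ) - 1) * ∑ᶠ p ∈ pairSet F n h, lamSharp j p.1 * lamSharp k p.2 := by
  classical
  have e : ∑ᶠ p ∈ {p : F[X] × F[X] |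
              p.1.natDegree = n ∧ p.1.coeff 0 ≠ 0 ∧ p.2.natDegree = n ∧ p.2.coeff 0 ≠ 0 ∧
              (p.1 - p.2).degree ≤ (h : WithBot ℕ)},
            lamSharp j p.1 * lamSharp k p.2 =
      ∑ᶠ x ∈ (((Finset.univ : Finset Fˣ) ×ˢ (pairSet_finite (F := F) n h).toFinset :
        Finset (Fˣ × (F[X] × F[X]))) : Set (Fˣ × (F[X] × F[X]))),
        lamSharp j x.2.1 * lamSharp k x.2.2 := by
    symm
    refine finsum_mem_eq_of_bijOn
      (fun x => (C (x.1 : F) * x.2.1, C (x.1 : F) * x.2.2)) ⟨?_, ?_, ?_⟩ ?_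
    · rintro ⟨c, a, b⟩ hx
      simp only [Finset.coe_product, Finset.coe_univ, Set.Finite.coe_toFinset, Set.mem_prod,
        Set.mem_univ, true_and] at hx
      obtain ⟨⟨ha, ha1, ha2⟩, ⟨hb, hb1, hb2⟩, hab⟩ := hx
      simp only at ha ha1 ha2 hb hb1 hb2 hab
      have hc : (c : F) ≠ 0 := c.ne_zero
      refine ⟨?_, ?_, ?_, ?_, ?_⟩
      · simpa [natDegree_C_mul hc] using ha1
      · simpa [hc] using ha2
      · simpa [natDegree_C_mul hc] using hb1
      · simpa [hc] using hb2
      · simp only [← mul_sub, degree_C_mul hc]; exact hab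
    · rintro ⟨c, a, b⟩ hx ⟨c', a', b'⟩ hx' heq
      simp only [Finset.coe_product, Finset.coe_univ, Set.Finite.coe_toFinset, Set.mem_prod,
        Set.mem_univ, true_and] at hx hx'
      obtain ⟨⟨ha, ha1, ha2⟩, ⟨hb, hb1, hb2⟩, hab⟩ := hx
      obtain ⟨⟨ha', ha1', ha2'⟩, ⟨hb', hb1', hb2'⟩, hab'⟩ := hx'
      simp only [Prod.mk.injEq] at heq ha ha' hb hb' ⊢
      obtain ⟨h1, h2⟩ := heq
      have hcc : (c : F) = c' := by
        have := congrArg leadingCoeff h1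
        simpa [leadingCoeff_mul, ha.leadingCoeff, ha'.leadingCoeff] using this
      have hC : C (c' : F) ≠ 0 := by simp
      rw [hcc] at h1 h2
      exact ⟨Units.ext hcc, mul_left_cancel₀ hC h1, mul_left_cancel₀ hC h2⟩
    · rintro ⟨a, b⟩ ⟨ha, ha0, hb, hb0, hab⟩
      simp only at ha ha0 hb hb0 hab
      have hl := lead_eq n h hh a b ha hb hab
      have hne : a.leadingCoeff ≠ 0 := by
        intro h; rw [leadingCoeff_eq_zero] at h; simp [h] at ha0
      have hne' := inv_ne_zero hne
      refine ⟨(Units.mk0 _ hne, C a.leadingCoeff⁻¹ * a, C a.leadingCoeff⁻¹ * b), ?_, ?_⟩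
      · simp only [Finset.coe_product, Finset.coe_univ, Set.Finite.coe_toFinset, Set.mem_prod,
          Set.mem_univ, true_and]
        refine ⟨⟨?_, ?_, ?_⟩, ⟨?_, ?_, ?_⟩, ?_⟩
        · simp only [Monic, leadingCoeff_mul, leadingCoeff_C]; exact inv_mul_cancel₀ hne
        · simp only [natDegree_C_mul hne', ha]
        · simpa only [coeff_C_mul] using mul_ne_zero hne' ha0
        · simp only [Monic, leadingCoeff_mul, leadingCoeff_C, ← hl]; exact inv_mul_cancel₀ hne
        · simp only [natDegree_C_mul hne', hb]
        · simpa only [coeff_C_mul] using mul_ne_zero hne' hb0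
        · simp only [← mul_sub, degree_C_mul hne']; exact hab
      · simp only [Units.val_mk0, ← mul_assoc, ← C_mul, mul_inv_cancel₀ hne, C_1, one_mul]
    · rintro ⟨c, a, b⟩ hx
      simp only [lamSharp_C_mul _ _ c.ne_zero]
  rw [e, finsum_mem_coe_finset, Finset.sum_product]
  simp only
  rw [Finset.sum_const, Finset.card_univ,
    Fintype.card_units, finsum_mem_eq_finite_toFinset_sum _ (pairSet_finite n h), nsmul_eq_mul,
    Nat.cast_sub Fintype.card_pos, Nat.cast_one]

lemma sum_lhs [Fintype F] (j k n h : ℕ) (hh : h < n) :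
    (∑ᶠ f ∈ {f : F[X] | f.Monic ∧ f.natDegree = n}, psiSharp j f h * psiSharp k f h) =
    (Fintype.card F : ℝ) ^ (h + 1) * ∑ᶠ p ∈ pairSet F n h, lamSharp j p.1 * lamSharp k p.2 := by
  classical
  have hA : (monicSharp F n).Finite :=
    (finite_natDegree n).subset (fun f hf => hf.2.1.le)
  have hM : {f : F[X] | f.Monic ∧ f.natDegree = n}.Finite :=
    (finite_natDegree n).subset (fun f hf => hf.2.le)
  have hpsi : ∀ (i : ℕ) (f : F[X]), f.natDegree = n → psiSharp i f h =
      ∑ g ∈ hA.toFinset, if (f - g).degree ≤ (h : WithBot ℕ) then lamSharp i g else 0 := by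
    intro i f hf
    rw [← Finset.sum_filter, ← finsum_mem_coe_finset, psiSharp, hf]
    congr 1
    ext g
    simp
  have hP : (pairSet_finite (F := F) n h).toFinset =
      (hA.toFinset ×ˢ hA.toFinset).filter
        (fun p => (p.1 - p.2).degree ≤ (h : WithBot ℕ)) := by
    ext p
    simp [pairSet, and_assoc]
  have hcount : ∀ g ∈ monicSharp F n,
      ((hM.toFinset.filter (fun f => (f - g).degree ≤ (h : WithBot ℕ))).card : ℝ)
        = (Fintype.card F : ℝ) ^ (h + 1) := by
    intro g hg
    rw [← Nat.cast_pow, ← ncard_near n h hh g hg.1 hg.2.1, ← Set.ncard_coe_finset]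
    congr 2
    ext f
    simp
  rw [finsum_mem_eq_finite_toFinset_sum _ hM,
    finsum_mem_eq_finite_toFinset_sum _ (pairSet_finite n h), hP, Finset.sum_filter,
    Finset.sum_product, Finset.mul_sum]
  have step : ∀ f ∈ hM.toFinset, psiSharp j f h * psiSharp k f h =
      ∑ a ∈ hA.toFinset, ∑ b ∈ hA.toFinset,
        (if (f - a).degree ≤ (h : WithBot ℕ) then lamSharp j a else 0) *
        (if (f - b).degree ≤ (h : WithBot ℕ) then lamSharp k b else 0) := by
    intro f hf
    rw [Set.Finite.mem_toFinset] at hf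
    rw [hpsi j f hf.2, hpsi k f hf.2, Finset.sum_mul_sum]
  rw [Finset.sum_congr rfl step, Finset.sum_comm]
  apply Finset.sum_congr rfl
  intro a ha
  rw [Set.Finite.mem_toFinset] at ha
  rw [Finset.sum_comm, Finset.mul_sum]
  apply Finset.sum_congr rfl
  intro b _
  by_cases hab : (a - b).degree ≤ (h : WithBot ℕ)
  · simp only [hab, if_true]
    rw [← hcount a ha, ← nsmul_eq_mul, ← Finset.sum_const, Finset.sum_filter]
    apply Finset.sum_congr rfl
    intro f _
    by_cases hfa : (f - a).degree ≤ (h : WithBot ℕ)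
    · simp only [hfa, near_trans' hfa hab, if_true]
    · simp only [hfa, if_false, zero_mul]
  · simp only [hab, if_false, mul_zero]
    apply Finset.sum_eq_zero
    intro f _
    by_cases hfa : (f - a).degree ≤ (h : WithBot ℕ)
    · by_cases hfb : (f - b).degree ≤ (h : WithBot ℕ)
      · exact absurd (near_trans hfa hfb) hab
      · simp only [hfb, if_false, mul_zero]
    · simp only [hfa, if_false, zero_mul]

end helpers

/-- Step 1 (equation (3.2)) in the proof of Theorem 1.4 of Rodgers,
"The covariance of almost-primes in F_q[T]":
`Σ_{f ∈ M_n} Ψ̃_j^♮(f;h) Ψ̃_k^♮(f;h)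
  = (q^{h+1}/(q−1)) Σ_{g₁,g₂ ∈ P_n^♮, g₁ ≡ g₂ (T^{n−h})} Λ̃_j^♮(g₁) Λ̃_k^♮(g₂)`. -/
theorem sum_psiSharp_eq (F : Type*) [Field F] [Fintype F] (j k n h : ℕ)
    (hj : 1 ≤ j) (hk : 1 ≤ k) (hh : h < n) :
    (∑ᶠ f ∈ {f : F[X] | f.Monic ∧ f.natDegree = n}, psiSharp j f h * psiSharp k f h)
      = ((Fintype.card F : ℝ) ^ (h + 1) / ((Fintype.card F : ℝ) - 1)) *
          ∑ᶠ p ∈ {p : F[X] × F[X] |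
              p.1.natDegree = n ∧ p.1.coeff 0 ≠ 0 ∧ p.2.natDegree = n ∧ p.2.coeff 0 ≠ 0 ∧
              (X : F[X]) ^ (n - h) ∣ (p.1 - p.2)},
            lamSharp j p.1 * lamSharp k p.2 := by
  rw [sum_lhs j k n h hh, sum_rev j k n h hh, sum_scale j k n h hh]
  have hq : (Fintype.card F : ℝ) - 1 ≠ 0 := by
    have h1 : 1 < Fintype.card F := Fintype.one_lt_card
    have h2 : (1 : ℝ) < Fintype.card F := by exact_mod_cast h1
    linarith
  rw [← mul_assoc, div_mul_cancel₀ _ hq]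
end
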